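/- Let f ∈ L^∞[1,∞), s ≥ 0, η a free ultrafilter on ℕ, and t ∈ [0,1). Set k = ⌊t+s⌋, t′ = t+s−k ∈ [0,1), and let η′ be the image ultrafilter of η under the map n ↦ n+k. Then ψ_{(η,t)}(x ↦ f(2^s x)) = ψ_{(η′,t′)}(f). (The group action f ↦ f(2^s ·) on L^∞[1,∞) is intertwined with the suspension flow on the parameters (η,t).) -/

import Mathlib

open Filter MeasureTheory

noncomputable section

/-- Lebesgue measure restricted to `[1,∞)`. -/
abbrev muIci : Measure ℝ := volume.restrict (Set.Ici (1:ℝ))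

/-!
Substituting `z = a * y` turns the mean of `y ↦ f (a * y)` over `[1, T]` into the mean of `f` over
`[1, a * T]`, except that the contribution `∫ y in 1..a, f y` of `[1, a]` is missing. Its weight
`(a * T)⁻¹` vanishes as `T → ∞`, so the two means have the same limits along any filter on which
`T → ∞`. For `a = b ^ s` and `T = b ^ (n + t)` one has `a * T = b ^ (n + k + (t + s - k))`: dilating
`f` amounts to pushing the filter of the `n` forward along `n ↦ n + k`.
-/

theorem limUnder_map {ι κ X : Type*} [TopologicalSpace X] [Nonempty X] (l : Filter ι) (g : ι → κ)
    (u : κ → X) : limUnder (l.map g) u = limUnder l (u ∘ g) :=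
  congrArg lim map_map

theorem limUnder_eq_of_tendsto_dist {ι X : Type*} [PseudoMetricSpace X] [Nonempty X]
    {l : Filter ι} {u v : ι → X} (huv : Tendsto (fun i ↦ dist (u i) (v i)) l (nhds 0)) :
    limUnder l u = limUnder l v :=
  -- `limUnder` is a choice from the set of limits, so equality holds even if no limit exists.
  congrArg Classical.epsilon (funext fun _ ↦ propext (tendsto_iff_of_dist huv))

theorem tendsto_rpow_natCast_add_atTop {b : ℝ} (hb : 1 < b) (t : ℝ) :
    Tendsto (fun n : ℕ ↦ b ^ ((n : ℝ) + t)) atTop atTop := by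
  have hb₀ : 0 < b := zero_lt_one.trans hb
  simp only [Real.rpow_add hb₀, Real.rpow_natCast]
  exact (tendsto_pow_atTop_atTop_of_one_lt hb).atTop_mul_const (Real.rpow_pos_of_pos hb₀ t)

theorem intervalIntegrable_of_locallyIntegrableOn_Ici {E : Type*} [NormedAddCommGroup E]
    {μ : Measure ℝ} {f : ℝ → E} {c x y : ℝ} (hf : LocallyIntegrableOn f (Set.Ici c) μ)
    (hx : c ≤ x) (hy : c ≤ y) : IntervalIntegrable f μ x y :=
  (hf.integrableOn_compact_subset (fun _ hz ↦ (le_inf hx hy).trans hz.1)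
    isCompact_uIcc).intervalIntegrable

section CesaroMean

variable {E : Type*} [NormedAddCommGroup E] [NormedSpace ℝ E] {f : ℝ → E}

/-- The Cesàro mean at `T` of a function on `[1, ∞)`, normalised by `T` and not by the length
`T - 1` of the interval of integration, so that `ψ_{(η,t)} f` is the limit along `η` of
`cesaroMean f (2 ^ (n + t))`. -/
def cesaroMean (f : ℝ → E) (T : ℝ) : E := T⁻¹ • ∫ y in Set.Icc 1 T, f y

theorem cesaroMean_eq_intervalIntegral (f : ℝ → E) {T : ℝ} (hT : 1 ≤ T) :
    cesaroMean f T = T⁻¹ • ∫ y in 1..T, f y := by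
  rw [cesaroMean, integral_Icc_eq_integral_Ioc, intervalIntegral.integral_of_le hT]

theorem cesaroMean_mul (hf : LocallyIntegrableOn f (Set.Ici 1)) {a T : ℝ} (ha : 1 ≤ a)
    (hT : 1 ≤ T) :
    cesaroMean f (a * T) =
      (a * T)⁻¹ • (∫ y in 1..a, f y) + cesaroMean (fun y ↦ f (a * y)) T := by
  have ha₀ : a ≠ 0 := (zero_lt_one.trans_le ha).ne'
  have haT : 1 ≤ a * T := one_le_mul_of_one_le_of_one_le ha hT
  have split : ∫ y in 1..(a * T), f y = (∫ y in 1..a, f y) + ∫ y in a..(a * T), f y :=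
    (intervalIntegral.integral_add_adjacent_intervals
      (intervalIntegrable_of_locallyIntegrableOn_Ici hf le_rfl ha)
      (intervalIntegrable_of_locallyIntegrableOn_Ici hf ha haT)).symm
  have dilate : ∫ y in 1..T, f (a * y) = a⁻¹ • ∫ y in a..(a * T), f y := by
    rw [intervalIntegral.integral_comp_mul_left f ha₀, mul_one]
  rw [cesaroMean_eq_intervalIntegral f haT, cesaroMean_eq_intervalIntegral _ hT, split, dilate,
    smul_add, smul_smul, mul_inv_rev]

theorem tendsto_dist_cesaroMean_comp_mul_left (hf : LocallyIntegrableOn f (Set.Ici 1)) {a : ℝ}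
    (ha : 1 ≤ a) :
    Tendsto (fun T ↦ dist (cesaroMean (fun y ↦ f (a * y)) T) (cesaroMean f (a * T)))
      atTop (nhds 0) := by
  have weight : Tendsto (fun T ↦ (a * T)⁻¹) atTop (nhds 0) :=
    tendsto_inv_atTop_zero.comp (tendsto_id.const_mul_atTop (zero_lt_one.trans_le ha))
  have initial : Tendsto (fun T ↦ ‖(a * T)⁻¹ • ∫ y in 1..a, f y‖) atTop (nhds 0) := by
    simpa only [zero_smul, norm_zero] using (weight.smul_const (∫ y in 1..a, f y)).norm
  refine initial.congr' ?_
  filter_upwards [eventually_ge_atTop 1] with T hT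
  rw [cesaroMean_mul hf ha hT, dist_comm, dist_eq_norm, add_sub_cancel_right]

theorem limUnder_cesaroMean_comp_mul_left {ι : Type*} (hf : LocallyIntegrableOn f (Set.Ici 1))
    {a : ℝ} (ha : 1 ≤ a) {l : Filter ι} {T : ι → ℝ} (hT : Tendsto T l atTop) :
    limUnder l (fun i ↦ cesaroMean (fun y ↦ f (a * y)) (T i)) =
      limUnder l (fun i ↦ cesaroMean f (a * T i)) :=
  limUnder_eq_of_tendsto_dist ((tendsto_dist_cesaroMean_comp_mul_left hf ha).comp hT)

theorem stmt7_general (hf : LocallyIntegrableOn f (Set.Ici 1)) {b s : ℝ} (hb : 1 < b)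
    (hs : 0 ≤ s) {l : Filter ℕ} (hl : l ≤ atTop) (t : ℝ) (k : ℕ) :
    limUnder l (fun n : ℕ ↦ cesaroMean (fun y ↦ f (b ^ s * y)) (b ^ ((n : ℝ) + t))) =
      limUnder (l.map (· + k)) (fun n : ℕ ↦ cesaroMean f (b ^ ((n : ℝ) + (t + s - k)))) := by
  have shift (n : ℕ) : b ^ s * b ^ ((n : ℝ) + t) = b ^ (((n + k : ℕ) : ℝ) + (t + s - k)) := by
    rw [← Real.rpow_add (zero_lt_one.trans hb)]
    push_cast
    ring_nf
  rw [limUnder_map, limUnder_cesaroMean_comp_mul_left hf (Real.one_le_rpow hb.le hs)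
    ((tendsto_rpow_natCast_add_atTop hb t).mono_left hl)]
  simp only [Function.comp_def, shift]

end CesaroMean

/-- For `f ∈ L^∞[1,∞)`, `s ≥ 0`, a free ultrafilter `η` on `ℕ` and
`t ∈ [0,1)`: with `k = ⌊t+s⌋`, `t′ = t+s−k` and `η′` the image of `η` under `n ↦ n+k`,
one has `ψ_{(η,t)}(x ↦ f(2^s x)) = ψ_{(η′,t′)}(f)`. -/
theorem stmt7 (f : ℝ → ℝ) (hf : MemLp f ⊤ muIci) (s : ℝ) (hs : 0 ≤ s)
    (η : Ultrafilter ℕ) (hη : (η : Filter ℕ) ≤ Filter.cofinite)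
    (t : ℝ) (ht : t ∈ Set.Ico (0:ℝ) 1) :
    limUnder (η : Filter ℕ)
        (fun n : ℕ => (2:ℝ) ^ (-((n : ℝ) + t)) *
          ∫ y in Set.Icc (1:ℝ) ((2:ℝ) ^ ((n : ℝ) + t)), f ((2:ℝ) ^ s * y)) =
      limUnder ((Ultrafilter.map (fun n : ℕ => n + ⌊t + s⌋₊) η : Ultrafilter ℕ) : Filter ℕ)
        (fun n : ℕ => (2:ℝ) ^ (-((n : ℝ) + (t + s - ⌊t + s⌋₊))) *
          ∫ y in Set.Icc (1:ℝ) ((2:ℝ) ^ ((n : ℝ) + (t + s - ⌊t + s⌋₊))), f y) := by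
  simp only [Real.rpow_neg zero_le_two]
  exact stmt7_general (locallyIntegrableOn_of_locallyIntegrable_restrict
    (hf.locallyIntegrable le_top)) one_lt_two hs (hη.trans_eq Nat.cofinite_eq_atTop) t ⌊t + s⌋₊
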